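/- Let Ω ⊂ ℝ^N be a bounded open set, r ≥ 0, and F ∈ L^∞(Ω × Ω, [0,+∞)). Then limsup_{ε→0⁺} ∫_{S^{N-1}} ∫_Ω χ_Ω(x+εn) F(x+εn, x)/ε^r dx dH^{N-1}(n) ≥ N · liminf_{s→+∞} s · L^{2N}({(x,y) ∈ Ω×Ω : F(y,x)/|y−x|^{r+N} > s}). -/

import Mathlib

open MeasureTheory Metric Set Filter ENNReal
open scoped Topology

noncomputable section

/-!
Write `f(x, y) = F(y, x) / |y - x| ^ (r + N)`. If `s · |{f > s}| ≥ ℓ` for all `s ≥ s₀`, then by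
the layer cake formula the integral of `min f S` is at least `ℓ · log (S / s₀)`. In polar
coordinates for `v = y - x`, the Jacobian turns the factor `|v| ^ (-N)` of `f` into `dt / t`; so
if the spherical integrals of radius `t < ρ` are at most `a`, the part of the integral with
`τ < |v| < ρ` is at most `a · log (ρ / τ)`. For `S = τ ^ (-N)` the offsets `|v| ≤ τ` and `|v| ≥ ρ`
contribute only `O(1)`, and comparing the coefficients of `log (1 / τ)` as `τ → 0` gives
`N · ℓ ≤ a`.

Mathlib's polar coordinates use the measure `toSphere`, defined by volumes of cones, whereas `μH`
is the Hausdorff measure without the usual normalising constant. A set of directions of small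
diameter `d` spans a shell of thickness `ε` of volume at least `ε` times its `toSphere` measure, and
this shell fits in a box of volume about `ε * d ^ (N - 1)`. Hence `toSphere ≤ μH[N - 1]`, which
suffices for a lower bound.
-/

section SurfaceMeasure

open scoped Pointwise RealInnerProductSpace

/-- The part of the half-open shell `1 ≤ ‖x‖ < 1 + ε` lying over the set `T` of directions. -/
def sphericalShell {E : Type*} [NormedAddCommGroup E] [NormedSpace ℝ E] (T : Set (sphere (0 : E) 1))
    (ε : ℝ) : Set E :=
  Ico 1 (1 + ε) • (Subtype.val '' T)

-- Bernoulli's inequality applied to the dilation by `1 + ε` of the cone `Ioo 0 1 • T`.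
lemma ofReal_mul_toSphere_le_measure_sphericalShell {E : Type*} [NormedAddCommGroup E]
    [NormedSpace ℝ E] [FiniteDimensional ℝ E] [MeasurableSpace E] [BorelSpace E]
    (μ : Measure E) [μ.IsAddHaarMeasure] {T : Set (sphere (0 : E) 1)} (hT : MeasurableSet T)
    {ε : ℝ} (hε : 0 ≤ ε) :
    ENNReal.ofReal ε * μ.toSphere T ≤ μ (sphericalShell T ε) := by
  set cone : Set E := Ioo (0 : ℝ) 1 • (Subtype.val '' T)
  have cone_ne_top : μ cone ≠ ⊤ := by
    refine ne_top_of_le_ne_top (measure_ball_lt_top (x := (0 : E)) (r := 1)).ne (measure_mono ?_)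
    rintro _ ⟨t, ht, _, ⟨n, -, rfl⟩, rfl⟩
    simpa [norm_smul, abs_of_pos ht.1] using ht.2
  have dilation_subset : (1 + ε) • cone ⊆ cone ∪ sphericalShell T ε := by
    rintro _ ⟨_, ⟨t, ht, n, hn, rfl⟩, rfl⟩
    simp only [smul_smul]
    rcases lt_or_ge ((1 + ε) * t) 1 with h | h
    · exact Or.inl (smul_mem_smul ⟨mul_pos (by linarith) ht.1, h⟩ hn)
    · exact Or.inr (smul_mem_smul ⟨h, mul_lt_of_lt_one_right (by linarith) ht.2⟩ hn)
  refine (ENNReal.add_le_add_iff_left cone_ne_top).1 ?_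
  calc μ cone + ENNReal.ofReal ε * μ.toSphere T
      = ENNReal.ofReal (1 + Module.finrank ℝ E * ε) * μ cone := by
        rw [μ.toSphere_apply' hT, ENNReal.ofReal_add zero_le_one (by positivity),
          ENNReal.ofReal_mul (Nat.cast_nonneg _), ENNReal.ofReal_natCast, ENNReal.ofReal_one]
        ring
    _ ≤ ENNReal.ofReal ((1 + ε) ^ Module.finrank ℝ E) * μ cone := by
        gcongr
        exact one_add_mul_le_pow (by linarith) _
    _ = μ ((1 + ε) • cone) := (μ.addHaar_smul_of_nonneg (by linarith) _).symm
    _ ≤ μ cone + μ (sphericalShell T ε) :=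
        (measure_mono dilation_subset).trans (measure_union_le _ _)

variable {E : Type*} [NormedAddCommGroup E] [InnerProductSpace ℝ E]

lemma ediam_image_inner_sphericalShell_le {T : Set (sphere (0 : E) 1)} {ε c d : ℝ}
    (hε : 0 ≤ ε) {e : E} (he : ‖e‖ = 1) (hc : ∀ n ∈ T, |⟪e, (n : E)⟫| ≤ c)
    (hd : ∀ n ∈ T, ∀ n' ∈ T, dist n n' ≤ d) :
    ediam ((fun x => ⟪e, x⟫) '' sphericalShell T ε) ≤ ENNReal.ofReal ((1 + ε) * d + ε * c) := by
  refine ediam_le_of_forall_dist_le ?_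
  rintro _ ⟨_, ⟨t, ht, _, ⟨n, hn, rfl⟩, rfl⟩, rfl⟩ _ ⟨_, ⟨t', ht', _, ⟨n', hn', rfl⟩, rfl⟩, rfl⟩
  have inner_sub_le : |⟪e, (n : E) - n'⟫| ≤ d := by
    calc |⟪e, (n : E) - n'⟫| ≤ ‖e‖ * ‖(n : E) - n'‖ := abs_real_inner_le_norm _ _
      _ ≤ d := by rw [he, one_mul, ← dist_eq_norm]; exact hd n hn n' hn'
  have abs_sub_le : |t - t'| ≤ ε := abs_sub_le_iff.2
    ⟨by linarith [ht.2, ht'.1], by linarith [ht'.2, ht.1]⟩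
  have ht0 : 0 ≤ t := by linarith [ht.1]
  calc dist ⟪e, t • (n : E)⟫ ⟪e, t' • (n' : E)⟫
      = |t * ⟪e, (n : E) - n'⟫ + (t - t') * ⟪e, (n' : E)⟫| := by
        rw [Real.dist_eq, inner_smul_right, inner_smul_right, inner_sub_right]
        ring_nf
    _ ≤ t * |⟪e, (n : E) - n'⟫| + |t - t'| * |⟪e, (n' : E)⟫| := by
        refine (abs_add_le _ _).trans_eq ?_
        rw [abs_mul, abs_mul, abs_of_nonneg ht0]
    _ ≤ (1 + ε) * d + ε * c := by
        gcongr
        · exact ht.2.le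
        · exact hc n' hn'

variable [FiniteDimensional ℝ E]

lemma exists_orthonormalBasis_apply_eq {ι : Type*} [Fintype ι]
    (hι : Module.finrank ℝ E = Fintype.card ι) (i : ι) {e : E} (he : ‖e‖ = 1) :
    ∃ b : OrthonormalBasis ι ℝ E, b i = e := by
  obtain ⟨b, hb⟩ := Orthonormal.exists_orthonormalBasis_extension_of_card_eq (𝕜 := ℝ) hι
    (v := fun _ => e) (s := {i}) ⟨fun _ => he, fun j k hjk => (hjk (Subsingleton.elim j k)).elim⟩
  exact ⟨b, hb i rfl⟩

variable [MeasurableSpace E] [BorelSpace E]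

lemma volume_le_prod_ediam_image_inner {ι : Type*} [Fintype ι] (b : OrthonormalBasis ι ℝ E)
    (s : Set E) : volume s ≤ ∏ i, ediam ((fun x => ⟪b i, x⟫) '' s) := by
  have coords_preserving : MeasurePreserving (fun x => (b.repr x).ofLp) volume volume :=
    (PiLp.volume_preserving_ofLp ι).comp b.measurePreserving_repr
  calc volume s ≤ volume ((fun x => (b.repr x).ofLp) ⁻¹' ((fun x => (b.repr x).ofLp) '' s)) :=
        measure_mono (subset_preimage_image _ _)
    _ ≤ volume ((fun x => (b.repr x).ofLp) '' s) := coords_preserving.measure_preimage_le _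
    _ ≤ ∏ i, ediam (Function.eval i '' ((fun x => (b.repr x).ofLp) '' s)) :=
        Real.volume_pi_le_prod_diam _
    _ = ∏ i, ediam ((fun x => ⟪b i, x⟫) '' s) := by
        simp only [image_image, Function.eval, b.repr_apply_apply]

-- In an orthonormal basis starting with a direction of `T`, the shell over `T` has extent about `ε`
-- along that direction and about `diam T` along the others.
lemma volume_sphericalShell_le {m : ℕ} (hm : Module.finrank ℝ E = m + 1)
    (T : Set (sphere (0 : E) 1)) {ε : ℝ} (hε : 0 ≤ ε) (hTε : diam T ≤ ε ^ 2) :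
    volume (sphericalShell T ε) ≤
      ENNReal.ofReal (ε * (1 + ε + ε ^ 2)) * ENNReal.ofReal ((1 + 2 * ε) * diam T) ^ m := by
  rcases T.eq_empty_or_nonempty with rfl | ⟨n₀, hn₀⟩
  · simp [sphericalShell]
  have hd : ∀ n ∈ T, ∀ n' ∈ T, dist n n' ≤ diam T := fun n hn n' hn' =>
    dist_le_diam_of_mem (isCompact_univ.isBounded.subset (subset_univ T)) hn hn'
  obtain ⟨b, hb⟩ := exists_orthonormalBasis_apply_eq (ι := Fin (m + 1)) (by simpa using hm) 0
    (norm_eq_of_mem_sphere n₀)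
  have radial_le : ediam ((fun x => ⟪b 0, x⟫) '' sphericalShell T ε) ≤
      ENNReal.ofReal (ε * (1 + ε + ε ^ 2)) := by
    refine (ediam_image_inner_sphericalShell_le (c := 1) hε (b.orthonormal.1 0) (fun n _ => ?_)
      hd).trans (ENNReal.ofReal_le_ofReal (by nlinarith))
    simpa using abs_real_inner_le_norm (b 0) (n : E)
  have tangential_le (i : Fin m) : ediam ((fun x => ⟪b i.succ, x⟫) '' sphericalShell T ε) ≤
      ENNReal.ofReal ((1 + 2 * ε) * diam T) := by
    refine (ediam_image_inner_sphericalShell_le (c := diam T) hε (b.orthonormal.1 _)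
      (fun n hn => ?_) hd).trans_eq (by ring_nf)
    have orthogonal : ⟪b i.succ, (n₀ : E)⟫ = 0 := hb ▸ b.orthonormal.2 (Fin.succ_ne_zero i)
    calc |⟪b i.succ, (n : E)⟫| = |⟪b i.succ, (n : E) - n₀⟫| := by
          rw [inner_sub_right, orthogonal, sub_zero]
      _ ≤ ‖b i.succ‖ * ‖(n : E) - n₀‖ := abs_real_inner_le_norm _ _
      _ ≤ diam T := by
          rw [b.orthonormal.1, one_mul, ← dist_eq_norm]
          exact hd n hn n₀ hn₀
  calc volume (sphericalShell T ε) ≤ ∏ i, ediam ((fun x => ⟪b i, x⟫) '' sphericalShell T ε) :=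
        volume_le_prod_ediam_image_inner b _
    _ ≤ _ := by
        rw [Fin.prod_univ_succ]
        gcongr
        simpa using Finset.prod_le_pow_card Finset.univ _ _ fun i _ => tangential_le i

lemma toSphere_le_mul_ediam_pow {m : ℕ} (hm : Module.finrank ℝ E = m + 1)
    {T : Set (sphere (0 : E) 1)} (hT : MeasurableSet T) {ε : ℝ} (hε : 0 < ε)
    (hTε : ediam T ≤ ENNReal.ofReal (ε ^ 2)) :
    (volume : Measure E).toSphere T ≤
      ENNReal.ofReal ((1 + ε + ε ^ 2) * (1 + 2 * ε) ^ m) * ediam T ^ m := by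
  have ediam_eq : ENNReal.ofReal (diam T) = ediam T :=
    ENNReal.ofReal_toReal (ne_top_of_le_ne_top ENNReal.ofReal_ne_top hTε)
  have hdiam : diam T ≤ ε ^ 2 := ENNReal.toReal_le_of_le_ofReal (sq_nonneg ε) hTε
  refine (ENNReal.mul_le_mul_iff_right (ENNReal.ofReal_pos.2 hε).ne' ENNReal.ofReal_ne_top).1 ?_
  calc ENNReal.ofReal ε * (volume : Measure E).toSphere T
      ≤ ENNReal.ofReal (ε * (1 + ε + ε ^ 2)) * ENNReal.ofReal ((1 + 2 * ε) * diam T) ^ m :=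
        (ofReal_mul_toSphere_le_measure_sphericalShell volume hT hε.le).trans
          (volume_sphericalShell_le hm T hε.le hdiam)
    _ = ENNReal.ofReal ε *
        (ENNReal.ofReal ((1 + ε + ε ^ 2) * (1 + 2 * ε) ^ m) * ediam T ^ m) := by
        rw [← ediam_eq, ENNReal.ofReal_mul hε.le, ENNReal.ofReal_mul (by positivity),
          ENNReal.ofReal_mul (by positivity), ENNReal.ofReal_pow (by positivity)]
        ring

lemma toSphere_le_hausdorffMeasure :
    (volume : Measure E).toSphere ≤ μH[(Module.finrank ℝ E : ℝ) - 1] := by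
  rcases Nat.eq_zero_or_eq_succ_pred (Module.finrank ℝ E) with h0 | hm
  · rw [(volume : Measure E).toSphere_eq_zero_iff_finrank.2 h0]
    exact Measure.zero_le _
  set m := (Module.finrank ℝ E).pred
  rw [hm, Nat.cast_succ, add_sub_cancel_right]
  let K (ε : ℝ) : ℝ≥0∞ := ENNReal.ofReal ((1 + ε + ε ^ 2) * (1 + 2 * ε) ^ m)
  have le_mul_hausdorff (ε : ℝ) (hε : 0 < ε) (A : Set (sphere (0 : E) 1)) :
      (volume : Measure E).toSphere A ≤ K ε * μH[(m : ℝ)] A := by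
    have hK0 : K ε ≠ 0 := (ENNReal.ofReal_pos.2 (by positivity)).ne'
    have smul_le : (K ε)⁻¹ • (volume : Measure E).toSphere ≤ μH[(m : ℝ)] := by
      refine Measure.le_hausdorffMeasure _ _ (ENNReal.ofReal (ε ^ 2)) (by positivity) fun T hT => ?_
      rw [Measure.smul_apply, smul_eq_mul, ENNReal.inv_mul_le_iff hK0 ENNReal.ofReal_ne_top,
        ENNReal.rpow_natCast, ← ediam_closure]
      exact (measure_mono subset_closure).trans <| toSphere_le_mul_ediam_pow hm
        isClosed_closure.measurableSet hε (by rwa [ediam_closure])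
    rw [← ENNReal.inv_mul_le_iff hK0 ENNReal.ofReal_ne_top]
    exact smul_le A
  have K_tendsto : Tendsto K (𝓝[>] 0) (𝓝 1) := by
    have hK : Continuous K := ENNReal.continuous_ofReal.comp (by fun_prop)
    simpa [K] using (hK.tendsto 0).mono_left nhdsWithin_le_nhds
  refine Measure.le_iff'.2 fun A => ?_
  refine ge_of_tendsto (b := (volume : Measure E).toSphere A) (x := 𝓝[>] (0 : ℝ))
    (by simpa using ENNReal.Tendsto.mul_const (b := μH[(m : ℝ)] A) K_tendsto (by simp)) ?_
  filter_upwards [self_mem_nhdsWithin] with ε hε using le_mul_hausdorff ε hε A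

lemma lintegral_toSphere_le_setLIntegral_hausdorffMeasure (G : E → ℝ≥0∞) :
    ∫⁻ n : sphere (0 : E) 1, G n ∂(volume : Measure E).toSphere ≤
      ∫⁻ n in sphere (0 : E) 1, G n ∂μH[(Module.finrank ℝ E : ℝ) - 1] := by
  rcases subsingleton_or_nontrivial E with hE | hE
  · simp [(volume : Measure E).toSphere_eq_zero_iff.2 hE]
  have dim_nonneg : (0 : ℝ) ≤ Module.finrank ℝ E - 1 :=
    sub_nonneg.2 (Nat.one_le_cast.2 Module.finrank_pos)
  have map_eq := (isometry_subtype_coe (s := sphere (0 : E) 1)).map_hausdorffMeasure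
    (Or.inl dim_nonneg)
  rw [Subtype.range_coe] at map_eq
  rw [← map_eq, (MeasurableEmbedding.subtype_coe isClosed_sphere.measurableSet).lintegral_map]
  exact lintegral_mono' toSphere_le_hausdorffMeasure le_rfl

end SurfaceMeasure

section LogarithmicIntegrals

lemma setLIntegral_Ioo_inv {α β : ℝ} (hα : 0 < α) (hαβ : α ≤ β) :
    ∫⁻ t in Ioo α β, ENNReal.ofReal t⁻¹ = ENNReal.ofReal (Real.log (β / α)) := by
  have inv_integrable : IntervalIntegrable (fun t : ℝ => t⁻¹) volume α β :=
    intervalIntegral.intervalIntegrable_inv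
      (fun t ht => (hα.trans_le (uIcc_of_le hαβ ▸ ht).1).ne') continuousOn_id
  have inv_nonneg : 0 ≤ᵐ[volume.restrict (Ioc α β)] fun t : ℝ => t⁻¹ := by
    filter_upwards [ae_restrict_mem measurableSet_Ioc] with t ht
    exact inv_nonneg.2 (hα.trans ht.1).le
  rw [Measure.restrict_congr_set Ioo_ae_eq_Ioc,
    ← ofReal_integral_eq_lintegral_ofReal inv_integrable.1 inv_nonneg,
    ← intervalIntegral.integral_of_le hαβ, integral_inv_of_pos hα (hα.trans_le hαβ)]

lemma mul_ofReal_log_le_lintegral_min {X : Type*} [MeasurableSpace X] (ν : Measure X) {f : X → ℝ}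
    (hf : Measurable f) (hf0 : ∀ x, 0 ≤ f x) {l : ℝ≥0∞} {s₀ S : ℝ} (hs₀ : 0 < s₀) (hS : s₀ ≤ S)
    (hl : ∀ s ≥ s₀, l ≤ ENNReal.ofReal s * ν {x | s < f x}) :
    l * ENNReal.ofReal (Real.log (S / s₀)) ≤ ∫⁻ x, ENNReal.ofReal (min (f x) S) ∂ν := by
  calc l * ENNReal.ofReal (Real.log (S / s₀))
      = ∫⁻ s in Ioo s₀ S, l * ENNReal.ofReal s⁻¹ := by
        rw [lintegral_const_mul _ (by fun_prop), setLIntegral_Ioo_inv hs₀ hS]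
    _ ≤ ∫⁻ s in Ioo s₀ S, ν {x | s < min (f x) S} := by
        refine setLIntegral_mono' measurableSet_Ioo fun s hs => ?_
        simp only [lt_min_iff, hs.2, and_true]
        rw [ENNReal.ofReal_inv_of_pos (hs₀.trans hs.1), ← div_eq_mul_inv]
        exact ENNReal.div_le_of_le_mul' (hl s hs.1.le)
    _ ≤ ∫⁻ s in Ioi 0, ν {x | s < min (f x) S} := lintegral_mono_set fun s hs => hs₀.trans hs.1
    _ = ∫⁻ x, ENNReal.ofReal (min (f x) S) ∂ν :=
        (lintegral_eq_lintegral_meas_lt ν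
          (Eventually.of_forall fun x => le_min (hf0 x) (hs₀.le.trans hS)) (by fun_prop)).symm

lemma natCast_mul_le_of_eventually_log_le {N : ℕ} (hN : N ≠ 0) {l a M : ℝ≥0∞} (hM : M ≠ ⊤)
    {ρ s₀ : ℝ} (hρ : 0 < ρ) (hs₀ : 0 < s₀)
    (h : ∀ᶠ R : ℝ in atTop, l * ENNReal.ofReal (Real.log (R ^ N / s₀)) ≤
      M + a * ENNReal.ofReal (Real.log (ρ * R))) :
    N * l ≤ a := by
  have log_inv : Tendsto (fun R => (Real.log R)⁻¹) atTop (𝓝 0) :=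
    tendsto_inv_atTop_zero.comp Real.tendsto_log_atTop
  have lhs_tendsto : Tendsto (fun R => l * ENNReal.ofReal (N - Real.log s₀ * (Real.log R)⁻¹))
      atTop (𝓝 (l * N)) := by
    refine ENNReal.Tendsto.const_mul ?_ (Or.inl (by simpa using hN))
    simpa using ENNReal.tendsto_ofReal ((log_inv.const_mul (Real.log s₀)).const_sub (N : ℝ))
  have rhs_tendsto : Tendsto (fun R => M * ENNReal.ofReal (Real.log R)⁻¹ +
      a * ENNReal.ofReal (Real.log ρ * (Real.log R)⁻¹ + 1)) atTop (𝓝 a) := by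
    have bounded_part := ENNReal.Tendsto.const_mul (ENNReal.tendsto_ofReal log_inv) (Or.inr hM)
    have log_part := ENNReal.Tendsto.const_mul (a := a) (ENNReal.tendsto_ofReal
      ((log_inv.const_mul (Real.log ρ)).add_const 1)) (Or.inl (by simp))
    simpa using bounded_part.add log_part
  rw [mul_comm]
  refine le_of_tendsto_of_tendsto lhs_tendsto rhs_tendsto ?_
  filter_upwards [h, eventually_gt_atTop 1] with R hR hR1
  have hR0 : 0 < R := one_pos.trans hR1
  have hlog : 0 < Real.log R := Real.log_pos hR1
  calc l * ENNReal.ofReal (N - Real.log s₀ * (Real.log R)⁻¹)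
      = l * ENNReal.ofReal (Real.log (R ^ N / s₀)) * ENNReal.ofReal (Real.log R)⁻¹ := by
        rw [mul_assoc, ← ENNReal.ofReal_mul' (inv_nonneg.2 hlog.le),
          Real.log_div (by positivity) hs₀.ne', Real.log_pow]
        field_simp
    _ ≤ (M + a * ENNReal.ofReal (Real.log (ρ * R))) * ENNReal.ofReal (Real.log R)⁻¹ := by gcongr
    _ = M * ENNReal.ofReal (Real.log R)⁻¹ +
        a * ENNReal.ofReal (Real.log ρ * (Real.log R)⁻¹ + 1) := by
        rw [add_mul, mul_assoc a, ← ENNReal.ofReal_mul' (inv_nonneg.2 hlog.le),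
          Real.log_mul hρ.ne' hR0.ne', add_mul, mul_inv_cancel₀ hlog.ne']

end LogarithmicIntegrals

section PolarCoordinates

variable {E : Type*} [NormedAddCommGroup E] [NormedSpace ℝ E] [FiniteDimensional ℝ E]
  [Nontrivial E] [MeasurableSpace E] [BorelSpace E] (μ : Measure E) [μ.IsAddHaarMeasure]

lemma lintegral_eq_lintegral_Ioi_toSphere {g : E → ℝ≥0∞} (hg : Measurable g) :
    ∫⁻ v, g v ∂μ = ∫⁻ t in Ioi (0 : ℝ), ENNReal.ofReal (t ^ (Module.finrank ℝ E - 1)) *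
      ∫⁻ n : sphere (0 : E) 1, g (t • n.1) ∂μ.toSphere := by
  have hm : Measurable fun p : sphere (0 : E) 1 × Ioi (0 : ℝ) => g (p.2.1 • p.1.1) :=
    hg.comp (by fun_prop)
  calc ∫⁻ v, g v ∂μ = ∫⁻ x : ({0}ᶜ : Set E), g x ∂μ.comap Subtype.val := by
        rw [lintegral_subtype_comap (measurableSet_singleton _).compl g, restrict_compl_singleton]
    _ = ∫⁻ p : sphere (0 : E) 1 × Ioi (0 : ℝ), g (p.2.1 • p.1.1)
          ∂μ.toSphere.prod (.volumeIoiPow (Module.finrank ℝ E - 1)) := by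
        rw [← μ.measurePreserving_homeomorphUnitSphereProd.lintegral_comp_emb
          (Homeomorph.measurableEmbedding _)]
        refine lintegral_congr fun x => ?_
        have hx : ‖x.1‖ ≠ 0 := norm_ne_zero_iff.2 x.2
        simp [smul_smul, hx]
    _ = ∫⁻ t : Ioi (0 : ℝ), ENNReal.ofReal (t.1 ^ (Module.finrank ℝ E - 1)) *
          ∫⁻ n : sphere (0 : E) 1, g (t.1 • n.1) ∂μ.toSphere ∂volume.comap Subtype.val := by
        rw [lintegral_prod_symm' _ hm, Measure.volumeIoiPow,
          lintegral_withDensity_eq_lintegral_mul _ (by fun_prop) hm.lintegral_prod_left']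
        rfl
    _ = _ := lintegral_subtype_comap measurableSet_Ioi fun t => ENNReal.ofReal
          (t ^ (Module.finrank ℝ E - 1)) * ∫⁻ n : sphere (0 : E) 1, g (t • n.1) ∂μ.toSphere

lemma setLIntegral_annulus_div_norm_pow_le {g : E → ℝ≥0∞} (hg : Measurable g) {a : ℝ≥0∞}
    {τ ρ : ℝ} (hτ : 0 < τ) (hτρ : τ ≤ ρ)
    (ha : ∀ t ∈ Ioo τ ρ, ∫⁻ n : sphere (0 : E) 1, g (t • n.1) ∂μ.toSphere ≤ a) :
    ∫⁻ v in {v | ‖v‖ ∈ Ioo τ ρ}, g v * ENNReal.ofReal (‖v‖ ^ Module.finrank ℝ E)⁻¹ ∂μ ≤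
      a * ENNReal.ofReal (Real.log (ρ / τ)) := by
  have hA : MeasurableSet {v : E | ‖v‖ ∈ Ioo τ ρ} := measurable_norm measurableSet_Ioo
  rw [← lintegral_indicator hA, lintegral_eq_lintegral_Ioi_toSphere μ
    (Measurable.indicator (by fun_prop) hA), ← setLIntegral_Ioo_inv hτ hτρ,
    ← lintegral_const_mul _ (by fun_prop), ← lintegral_indicator measurableSet_Ioo]
  refine (setLIntegral_mono' measurableSet_Ioi fun t ht => ?_).trans (setLIntegral_le_lintegral _ _)
  have ht0 : (0 : ℝ) < t := ht
  have norm_smul_eq (n : sphere (0 : E) 1) : ‖t • n.1‖ = t := by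
    rw [norm_smul, norm_eq_of_mem_sphere, Real.norm_of_nonneg ht0.le, mul_one]
  by_cases htA : t ∈ Ioo τ ρ
  · simp only [indicator, mem_ofPred_eq, norm_smul_eq, htA, if_true]
    rw [lintegral_mul_const' _ _ ENNReal.ofReal_ne_top]
    have jacobian : t ^ (Module.finrank ℝ E - 1) * (t ^ Module.finrank ℝ E)⁻¹ = t⁻¹ := by
      rw [← mul_pow_sub_one Module.finrank_pos.ne' t, mul_inv_rev,
        mul_inv_cancel_left₀ (by positivity)]
    calc _ ≤ ENNReal.ofReal (t ^ (Module.finrank ℝ E - 1)) *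
          (a * ENNReal.ofReal (t ^ Module.finrank ℝ E)⁻¹) := by gcongr; exact ha t htA
      _ = a * ENNReal.ofReal t⁻¹ := by
          rw [mul_left_comm, ← ENNReal.ofReal_mul (by positivity), jacobian]
  · simp only [indicator, mem_ofPred_eq, norm_smul_eq, htA, if_false, lintegral_zero, mul_zero,
      zero_le]

end PolarCoordinates

section OffsetIntegral

/-- The integral of a kernel `G` over those pairs of points of `Ω` whose second point is the first
one translated by `v`. The characteristic function of `Ω` appears as a factor. -/
def offsetIntegral {E : Type*} [Add E] [MeasurableSpace E] (μ : Measure E) (Ω : Set E)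
    (G : E → E → ℝ≥0∞) (v : E) : ℝ≥0∞ :=
  ∫⁻ x in Ω, Ω.indicator (fun _ => (1 : ℝ≥0∞)) (x + v) * G x (x + v) ∂μ

lemma offsetIntegral_mono {E : Type*} [Add E] [MeasurableSpace E] (μ : Measure E) (Ω : Set E)
    {G G' : E → E → ℝ≥0∞} {v : E} (h : ∀ x, G x (x + v) ≤ G' x (x + v)) :
    offsetIntegral μ Ω G v ≤ offsetIntegral μ Ω G' v :=
  lintegral_mono fun x => mul_le_mul_right (h x) _

lemma offsetIntegral_mul_const {E : Type*} [Add E] [MeasurableSpace E] (μ : Measure E) (Ω : Set E)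
    (G : E → E → ℝ≥0∞) {c : ℝ≥0∞} (hc : c ≠ ⊤) (v : E) :
    offsetIntegral μ Ω (fun x y => G x y * c) v = offsetIntegral μ Ω G v * c := by
  simp only [offsetIntegral, ← mul_assoc, lintegral_mul_const' _ _ hc]

lemma offsetIntegral_const_le {E : Type*} [Add E] [MeasurableSpace E] (μ : Measure E) (Ω : Set E)
    (c : ℝ≥0∞) (v : E) : offsetIntegral μ Ω (fun _ _ => c) v ≤ c * μ Ω := by
  rw [← setLIntegral_const]
  exact lintegral_mono fun x => mul_le_of_le_one_left' (indicator_le_self' (by simp) _)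

lemma measurable_offsetIntegral {E : Type*} [Add E] [MeasurableSpace E] [MeasurableAdd₂ E]
    (μ : Measure E) [SFinite μ] {Ω : Set E} {G : E → E → ℝ≥0∞} (hΩ : MeasurableSet Ω)
    (hG : Measurable (Function.uncurry G)) : Measurable (offsetIntegral μ Ω G) := by
  have hadd : Measurable fun p : E × E => p.2 + p.1 := measurable_snd.add measurable_fst
  exact (((measurable_const.indicator hΩ).comp hadd).mul
    (hG.comp (measurable_snd.prodMk hadd))).lintegral_prod_right'

lemma setLIntegral_prod_self_eq_lintegral_offsetIntegral {E : Type*} [AddGroup E]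
    [MeasurableSpace E] [MeasurableAdd₂ E] (μ : Measure E) [SFinite μ] [μ.IsAddLeftInvariant]
    {Ω : Set E} {G : E → E → ℝ≥0∞} (hΩ : MeasurableSet Ω)
    (hG : Measurable (Function.uncurry G)) :
    ∫⁻ p in Ω ×ˢ Ω, G p.1 p.2 ∂μ.prod μ = ∫⁻ v, offsetIntegral μ Ω G v ∂μ := by
  have hind : Measurable ((Ω ×ˢ Ω).indicator (Function.uncurry G)) := hG.indicator (hΩ.prod hΩ)
  have hshift := measurePreserving_prod_add_swap μ μ
  calc ∫⁻ p in Ω ×ˢ Ω, G p.1 p.2 ∂μ.prod μ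
      = ∫⁻ p, (Ω ×ˢ Ω).indicator (Function.uncurry G) p ∂μ.prod μ :=
        (lintegral_indicator (hΩ.prod hΩ) _).symm
    _ = ∫⁻ v, ∫⁻ x, (Ω ×ˢ Ω).indicator (Function.uncurry G) (x, x + v) ∂μ ∂μ := by
        rw [← hshift.lintegral_comp hind]
        exact lintegral_prod _ (hind.comp hshift.measurable).aemeasurable
    _ = ∫⁻ v, offsetIntegral μ Ω G v ∂μ := by
        refine lintegral_congr fun v => ?_
        rw [offsetIntegral, ← lintegral_indicator hΩ]
        refine lintegral_congr fun x => ?_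
        by_cases hx : x ∈ Ω <;> by_cases hxv : x + v ∈ Ω <;> simp [hx, hxv]

end OffsetIntegral

section QuotientKernel

/-- The kernel `F(y, x) / |y - x| ^ q`. For `q ≠ 0` it vanishes at `x = y`,
since division by `0` gives `0`. -/
def quotientKernel {E : Type*} [NormedAddCommGroup E] (F : E → E → ℝ) (q : ℝ) (x y : E) : ℝ :=
  F y x / ‖y - x‖ ^ q

variable {E : Type*} [NormedAddCommGroup E] {F : E → E → ℝ}

lemma quotientKernel_nonneg (hF0 : ∀ x y, 0 ≤ F x y) (q : ℝ) (x y : E) :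
    0 ≤ quotientKernel F q x y :=
  div_nonneg (hF0 _ _) (Real.rpow_nonneg (norm_nonneg _) _)

lemma quotientKernel_add_natCast (F : E → E → ℝ) (r : ℝ) (N : ℕ) {x y : E} (hxy : x ≠ y) :
    quotientKernel F (r + N) x y = quotientKernel F r x y * (‖y - x‖ ^ N)⁻¹ := by
  rw [quotientKernel, quotientKernel, Real.rpow_add (norm_pos_iff.2 (sub_ne_zero.2 hxy.symm)),
    Real.rpow_natCast, ← div_eq_mul_inv, div_div]

lemma quotientKernel_le_div_rpow (hF0 : ∀ x y, 0 ≤ F x y) {q ρ : ℝ} (hq : 0 ≤ q) (hρ : 0 < ρ)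
    {x y : E} (hxy : ρ ≤ ‖y - x‖) : quotientKernel F q x y ≤ F y x / ρ ^ q :=
  div_le_div_of_nonneg_left (hF0 _ _) (Real.rpow_pos_of_pos hρ q)
    (Real.rpow_le_rpow hρ.le hxy hq)

lemma measurable_quotientKernel [MeasurableSpace E] [BorelSpace E] [SecondCountableTopology E]
    (hF : Measurable (Function.uncurry F)) (q : ℝ) :
    Measurable (Function.uncurry (quotientKernel F q)) :=
  (hF.comp measurable_swap).div ((measurable_snd.sub measurable_fst).norm.pow_const q)

lemma setLIntegral_norm_ge_offsetIntegral_quotientKernel_le [MeasurableSpace E] [BorelSpace E]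
    [SecondCountableTopology E] (μ : Measure E) [SFinite μ] [μ.IsAddLeftInvariant] {Ω : Set E}
    (hΩ : MeasurableSet Ω) (hF : Measurable (Function.uncurry F)) (hF0 : ∀ x y, 0 ≤ F x y)
    {q ρ : ℝ} (hq : 0 ≤ q) (hρ : 0 < ρ) :
    ∫⁻ v in {v | ρ ≤ ‖v‖},
        offsetIntegral μ Ω (fun x y => ENNReal.ofReal (quotientKernel F q x y)) v ∂μ ≤
      (∫⁻ p in Ω ×ˢ Ω, ENNReal.ofReal (F p.2 p.1) ∂μ.prod μ) * ENNReal.ofReal (ρ ^ q)⁻¹ := by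
  rw [setLIntegral_prod_self_eq_lintegral_offsetIntegral μ (G := fun x y => ENNReal.ofReal (F y x))
    hΩ (hF.comp measurable_swap).ennreal_ofReal, ← lintegral_mul_const' _ _ ENNReal.ofReal_ne_top]
  refine (setLIntegral_mono' (measurableSet_le measurable_const measurable_norm)
    fun v hv => ?_).trans (setLIntegral_le_lintegral _ _)
  rw [← offsetIntegral_mul_const μ Ω _ ENNReal.ofReal_ne_top]
  refine offsetIntegral_mono μ Ω fun x => ?_
  rw [← ENNReal.ofReal_mul (hF0 _ _), ← div_eq_mul_inv]
  refine ENNReal.ofReal_le_ofReal (quotientKernel_le_div_rpow hF0 hq hρ ?_)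
  rwa [add_sub_cancel_left]

section HaarMeasure

variable [NormedSpace ℝ E] [FiniteDimensional ℝ E] [Nontrivial E] [MeasurableSpace E]
  [BorelSpace E] (μ : Measure E) [μ.IsAddHaarMeasure] {Ω : Set E} {r : ℝ}

lemma setLIntegral_annulus_offsetIntegral_quotientKernel_le (hΩ : MeasurableSet Ω)
    (hF : Measurable (Function.uncurry F)) (hF0 : ∀ x y, 0 ≤ F x y) {a : ℝ≥0∞} {τ ρ : ℝ}
    (hτ : 0 < τ) (hτρ : τ ≤ ρ)
    (ha : ∀ t ∈ Ioo τ ρ, ∫⁻ n : sphere (0 : E) 1,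
      offsetIntegral μ Ω (fun x y => ENNReal.ofReal (quotientKernel F r x y)) (t • n.1)
        ∂μ.toSphere ≤ a) :
    ∫⁻ v in {v | ‖v‖ ∈ Ioo τ ρ}, offsetIntegral μ Ω
        (fun x y => ENNReal.ofReal (quotientKernel F (r + Module.finrank ℝ E) x y)) v ∂μ ≤
      a * ENNReal.ofReal (Real.log (ρ / τ)) := by
  refine (setLIntegral_mono' (measurable_norm measurableSet_Ioo) fun v hv => ?_).trans
    (setLIntegral_annulus_div_norm_pow_le μ (measurable_offsetIntegral μ
      (G := fun x y => ENNReal.ofReal (quotientKernel F r x y)) hΩ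
      (measurable_quotientKernel hF r).ennreal_ofReal) hτ hτρ ha)
  have hv0 : v ≠ 0 := norm_pos_iff.1 (hτ.trans hv.1)
  rw [← offsetIntegral_mul_const μ Ω _ ENNReal.ofReal_ne_top]
  refine offsetIntegral_mono μ Ω fun x => ?_
  rw [← ENNReal.ofReal_mul (quotientKernel_nonneg hF0 _ _ _),
    quotientKernel_add_natCast F r _ (by simpa using hv0), add_sub_cancel_left]

-- The truncation at height `S` controls offsets of norm at most `τ`, the spherical bound `a` those
-- between `τ` and `ρ`, and integrability of `F` those of norm at least `ρ`.
lemma setLIntegral_min_quotientKernel_le (hΩ : MeasurableSet Ω) (hr : 0 ≤ r + Module.finrank ℝ E)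
    (hF : Measurable (Function.uncurry F)) (hF0 : ∀ x y, 0 ≤ F x y) {a : ℝ≥0∞} {τ ρ : ℝ}
    (hτ : 0 < τ) (hτρ : τ ≤ ρ)
    (ha : ∀ t ∈ Ioo τ ρ, ∫⁻ n : sphere (0 : E) 1,
      offsetIntegral μ Ω (fun x y => ENNReal.ofReal (quotientKernel F r x y)) (t • n.1)
        ∂μ.toSphere ≤ a) (S : ℝ) :
    ∫⁻ p in Ω ×ˢ Ω, ENNReal.ofReal
        (min (quotientKernel F (r + Module.finrank ℝ E) p.1 p.2) S) ∂μ.prod μ ≤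
      ENNReal.ofReal S * μ Ω * μ (closedBall 0 τ) + a * ENNReal.ofReal (Real.log (ρ / τ)) +
        (∫⁻ p in Ω ×ˢ Ω, ENNReal.ofReal (F p.2 p.1) ∂μ.prod μ) *
          ENNReal.ofReal (ρ ^ (r + Module.finrank ℝ E))⁻¹ := by
  set q := r + Module.finrank ℝ E
  set J := offsetIntegral μ Ω fun x y => ENNReal.ofReal (min (quotientKernel F q x y) S)
  have J_le_truncation (v : E) : J v ≤ ENNReal.ofReal S * μ Ω :=
    (offsetIntegral_mono μ Ω fun x => ENNReal.ofReal_le_ofReal (min_le_right _ _)).trans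
      (offsetIntegral_const_le μ Ω _ v)
  have J_le_untruncated : J ≤ offsetIntegral μ Ω fun x y =>
      ENNReal.ofReal (quotientKernel F q x y) :=
    fun v => offsetIntegral_mono μ Ω fun x => ENNReal.ofReal_le_ofReal (min_le_left _ _)
  have near : ∫⁻ v in closedBall 0 τ, J v ∂μ ≤ ENNReal.ofReal S * μ Ω * μ (closedBall 0 τ) :=
    (lintegral_mono J_le_truncation).trans_eq (setLIntegral_const _ _)
  have middle : ∫⁻ v in {v | ‖v‖ ∈ Ioo τ ρ}, J v ∂μ ≤ a * ENNReal.ofReal (Real.log (ρ / τ)) :=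
    (lintegral_mono J_le_untruncated).trans
      (setLIntegral_annulus_offsetIntegral_quotientKernel_le μ hΩ hF hF0 hτ hτρ ha)
  have far : ∫⁻ v in {v | ρ ≤ ‖v‖}, J v ∂μ ≤
      (∫⁻ p in Ω ×ˢ Ω, ENNReal.ofReal (F p.2 p.1) ∂μ.prod μ) * ENNReal.ofReal (ρ ^ q)⁻¹ :=
    (lintegral_mono J_le_untruncated).trans
      (setLIntegral_norm_ge_offsetIntegral_quotientKernel_le μ hΩ hF hF0 hr (hτ.trans_le hτρ))
  have cover : (univ : Set E) ⊆ closedBall 0 τ ∪ {v | ‖v‖ ∈ Ioo τ ρ} ∪ {v | ρ ≤ ‖v‖} := by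
    intro v _
    rcases le_or_gt ‖v‖ τ with h | h
    · exact Or.inl (Or.inl (mem_closedBall_zero_iff.2 h))
    · exact (lt_or_ge ‖v‖ ρ).imp (fun h' => Or.inr ⟨h, h'⟩) id
  calc _ = ∫⁻ v in univ, J v ∂μ := by
        rw [setLIntegral_univ]
        exact setLIntegral_prod_self_eq_lintegral_offsetIntegral μ
          (G := fun x y => ENNReal.ofReal (min (quotientKernel F q x y) S)) hΩ
          ((measurable_quotientKernel hF q).min measurable_const).ennreal_ofReal
    _ ≤ ∫⁻ v in closedBall 0 τ ∪ {v | ‖v‖ ∈ Ioo τ ρ} ∪ {v | ρ ≤ ‖v‖}, J v ∂μ :=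
        lintegral_mono_set cover
    _ ≤ _ := (lintegral_union_le _ _ _).trans
        (add_le_add ((lintegral_union_le _ _ _).trans (add_le_add near middle)) far)

lemma finrank_mul_le_of_forall_toSphere_le (hΩ : MeasurableSet Ω) (hΩ_fin : μ Ω ≠ ⊤)
    (hr : 0 ≤ r + Module.finrank ℝ E) (hF : Measurable (Function.uncurry F))
    (hF0 : ∀ x y, 0 ≤ F x y)
    (hF_int : IntegrableOn (Function.uncurry F) (Ω ×ˢ Ω) (μ.prod μ)) {a l : ℝ≥0∞} {ρ s₀ : ℝ}
    (hρ : 0 < ρ) (hs₀ : 0 < s₀)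
    (ha : ∀ t ∈ Ioo 0 ρ, ∫⁻ n : sphere (0 : E) 1,
      offsetIntegral μ Ω (fun x y => ENNReal.ofReal (quotientKernel F r x y)) (t • n.1)
        ∂μ.toSphere ≤ a)
    (hl : ∀ s ≥ s₀, l ≤ ENNReal.ofReal s * μ.prod μ {p : E × E | p.1 ∈ Ω ∧ p.2 ∈ Ω ∧
      s < quotientKernel F (r + Module.finrank ℝ E) p.1 p.2}) :
    Module.finrank ℝ E * l ≤ a := by
  set N := Module.finrank ℝ E
  have hN0 : N ≠ 0 := Module.finrank_pos.ne'
  set M := μ Ω * μ (ball 0 1) + (∫⁻ p in Ω ×ˢ Ω, ENNReal.ofReal (F p.2 p.1) ∂μ.prod μ) *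
    ENNReal.ofReal (ρ ^ (r + N))⁻¹ with hM
  have hM_fin : M ≠ ⊤ := by
    have hF_fin : ∫⁻ p in Ω ×ˢ Ω, ENNReal.ofReal (F p.2 p.1) ∂μ.prod μ ≠ ⊤ :=
      (lt_of_le_of_lt (lintegral_ofReal_le_lintegral_enorm _) hF_int.swap.2).ne
    have := (measure_ball_lt_top (μ := μ) (x := (0 : E)) (r := 1)).ne
    finiteness
  have superlevel_eq (s : ℝ) :
      {p : E × E | p.1 ∈ Ω ∧ p.2 ∈ Ω ∧ s < quotientKernel F (r + N) p.1 p.2} =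
        {p | s < quotientKernel F (r + N) p.1 p.2} ∩ Ω ×ˢ Ω := by
    ext p
    simp only [mem_ofPred_eq, mem_inter_iff, mem_prod]
    tauto
  refine natCast_mul_le_of_eventually_log_le hN0 hM_fin hρ hs₀ ?_
  filter_upwards [eventually_gt_atTop 0, eventually_ge_atTop ρ⁻¹,
    (tendsto_pow_atTop hN0).eventually_ge_atTop s₀] with R hR hRρ hRs
  calc l * ENNReal.ofReal (Real.log (R ^ N / s₀))
      ≤ ∫⁻ p in Ω ×ˢ Ω, ENNReal.ofReal (min (quotientKernel F (r + N) p.1 p.2) (R ^ N))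
          ∂μ.prod μ := by
        refine mul_ofReal_log_le_lintegral_min _ (measurable_quotientKernel hF _)
          (fun p => quotientKernel_nonneg hF0 _ _ _) hs₀ hRs fun s hs => ?_
        rw [Measure.restrict_apply' (hΩ.prod hΩ)]
        exact superlevel_eq s ▸ hl s hs
    _ ≤ ENNReal.ofReal (R ^ N) * μ Ω * μ (closedBall 0 R⁻¹) +
          a * ENNReal.ofReal (Real.log (ρ / R⁻¹)) +
          (∫⁻ p in Ω ×ˢ Ω, ENNReal.ofReal (F p.2 p.1) ∂μ.prod μ) *
            ENNReal.ofReal (ρ ^ (r + N))⁻¹ :=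
        setLIntegral_min_quotientKernel_le μ hΩ hr hF hF0 (inv_pos.2 hR)
          (inv_le_of_inv_le₀ hρ hRρ)
          (fun t ht => ha t ⟨(inv_pos.2 hR).trans ht.1, ht.2⟩) _
    _ = M + a * ENNReal.ofReal (Real.log (ρ * R)) := by
        have scaling : ENNReal.ofReal (R ^ N) * ENNReal.ofReal (R⁻¹ ^ N) = 1 := by
          rw [← ENNReal.ofReal_mul (by positivity), ← mul_pow, mul_inv_cancel₀ hR.ne', one_pow,
            ENNReal.ofReal_one]
        rw [μ.addHaar_closedBall _ (inv_nonneg.2 hR.le), div_inv_eq_mul, hM,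
          mul_mul_mul_comm (ENNReal.ofReal _), scaling, one_mul]
        ring

lemma finrank_mul_liminf_le_limsup_toSphere (hΩ : MeasurableSet Ω) (hΩ_fin : μ Ω ≠ ⊤)
    (hr : 0 ≤ r + Module.finrank ℝ E) (hF : Measurable (Function.uncurry F))
    (hF0 : ∀ x y, 0 ≤ F x y)
    (hF_int : IntegrableOn (Function.uncurry F) (Ω ×ˢ Ω) (μ.prod μ)) :
    Module.finrank ℝ E * liminf (fun s : ℝ => ENNReal.ofReal s * μ.prod μ {p : E × E |
        p.1 ∈ Ω ∧ p.2 ∈ Ω ∧ s < quotientKernel F (r + Module.finrank ℝ E) p.1 p.2}) atTop ≤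
      limsup (fun ε : ℝ => ∫⁻ n : sphere (0 : E) 1,
        offsetIntegral μ Ω (fun x y => ENNReal.ofReal (quotientKernel F r x y)) (ε • n.1)
          ∂μ.toSphere) (𝓝[>] 0) := by
  refine le_of_forall_gt_imp_ge_of_dense fun a ha =>
    ENNReal.mul_le_of_forall_lt fun N' hN' l hl => (mul_le_mul_left hN'.le l).trans ?_
  obtain ⟨ρ, hρ, ha⟩ := mem_nhdsGT_iff_exists_Ioo_subset.1 (eventually_lt_of_limsup_lt ha)
  obtain ⟨s₀, hs₀⟩ := eventually_atTop.1
    ((eventually_lt_of_lt_liminf hl).and (eventually_gt_atTop 0))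
  exact finrank_mul_le_of_forall_toSphere_le μ hΩ hΩ_fin hr hF hF0 hF_int hρ (hs₀ s₀ le_rfl).2
    (fun t ht => (ha ht).le) fun s hs => (hs₀ s hs).1.le

end HaarMeasure

end QuotientKernel

theorem stmt_2_general {E : Type*} [NormedAddCommGroup E] [InnerProductSpace ℝ E]
    [FiniteDimensional ℝ E] [MeasurableSpace E] [BorelSpace E] {Ω : Set E}
    (hΩ : MeasurableSet Ω) (hΩ_fin : volume Ω ≠ ⊤) {r : ℝ} (hr : 0 ≤ r + Module.finrank ℝ E)
    {F : E → E → ℝ} (hF : Measurable (Function.uncurry F)) (hF0 : ∀ x y, 0 ≤ F x y)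
    (hF_int : IntegrableOn (Function.uncurry F) (Ω ×ˢ Ω)) :
    limsup
        (fun ε : ℝ =>
          ∫⁻ n in sphere (0 : E) 1,
            (∫⁻ x in Ω,
              (Ω.indicator (fun _ => (1 : ℝ≥0∞)) (x + ε • n)) *
                ENNReal.ofReal (F (x + ε • n) x / ε ^ r)) ∂(μH[(Module.finrank ℝ E : ℝ) - 1]))
        (𝓝[>] (0 : ℝ)) ≥
      (Module.finrank ℝ E : ℝ≥0∞) *
        liminf
          (fun s : ℝ =>
            ENNReal.ofReal s *
              volume {p : E × E | p.1 ∈ Ω ∧ p.2 ∈ Ω ∧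
                s < F p.2 p.1 / ‖p.2 - p.1‖ ^ (r + (Module.finrank ℝ E : ℝ))})
          atTop := by
  rcases subsingleton_or_nontrivial E with hE | hE
  · simp [Module.finrank_zero_of_subsingleton]
  refine (finrank_mul_liminf_le_limsup_toSphere volume hΩ hΩ_fin hr hF hF0 hF_int).trans
    (limsup_le_limsup ?_)
  filter_upwards [self_mem_nhdsWithin] with ε hε
  have norm_smul_eq (n : sphere (0 : E) 1) : ‖ε • n.1‖ = ε := by
    rw [norm_smul, norm_eq_of_mem_sphere, mul_one, Real.norm_of_nonneg (le_of_lt hε)]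
  simp only [offsetIntegral, quotientKernel, add_sub_cancel_left, norm_smul_eq]
  exact lintegral_toSphere_le_setLIntegral_hausdorffMeasure _

/-- limsup over ε→0⁺ of the spherical integral of a bounded nonnegative
kernel `F` on a bounded open set is at least `N` times the liminf of `s · L^{2N}` of the
superlevel sets of `F(y,x)/|y-x|^{r+N}`. -/
theorem stmt_2 (N : ℕ) (Ω : Set (EuclideanSpace ℝ (Fin N)))
    (hΩopen : IsOpen Ω) (hΩbd : Bornology.IsBounded Ω)
    (r : ℝ) (hr : 0 ≤ r)
    (F : EuclideanSpace ℝ (Fin N) → EuclideanSpace ℝ (Fin N) → ℝ)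
    (hFmeas : Measurable (Function.uncurry F))
    (hFpos : ∀ x y, 0 ≤ F x y) (C : ℝ) (hFbd : ∀ x y, F x y ≤ C) :
    Filter.limsup
        (fun ε : ℝ =>
          ∫⁻ n in sphere (0 : EuclideanSpace ℝ (Fin N)) 1,
            (∫⁻ x in Ω,
              (Ω.indicator (fun _ => (1 : ℝ≥0∞)) (x + ε • n)) *
                ENNReal.ofReal (F (x + ε • n) x / ε ^ r)) ∂(μH[(N : ℝ) - 1]))
        (𝓝[>] (0 : ℝ)) ≥
      (N : ℝ≥0∞) *
        Filter.liminf
          (fun s : ℝ =>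
            ENNReal.ofReal s *
              volume {p : EuclideanSpace ℝ (Fin N) × EuclideanSpace ℝ (Fin N) |
                p.1 ∈ Ω ∧ p.2 ∈ Ω ∧ s < F p.2 p.1 / ‖p.2 - p.1‖ ^ (r + (N : ℝ))})
          Filter.atTop := by
  have hF_int : IntegrableOn (Function.uncurry F) (Ω ×ˢ Ω) :=
    .of_bound (hΩbd.prod hΩbd).measure_lt_top hFmeas.aestronglyMeasurable C <|
      .of_forall fun p => (Real.norm_of_nonneg (hFpos _ _)).trans_le (hFbd _ _)
  simpa only [finrank_euclideanSpace_fin] using stmt_2_general hΩopen.measurableSet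
    hΩbd.measure_lt_top.ne (add_nonneg hr (Nat.cast_nonneg _)) hFmeas hFpos hF_int
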